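/- arXiv:math/0302317 — 3 statements merged into one kernel-verified Lean document; each statement's English description precedes it below -/
import Mathlib

section
/- For every quadruple (V₁, V₁′, a, b) in Σ there exist an integer k with 1 ≤ k ≤ d and an admissible flag of level k for (V₁, V₁′, a, b); in other words, the images π_k(Σ̃_k) for k = 1, …, d cover all of Σ. -/
/-- §10.2: an admissible flag of level `k` for a quadruple `(V₁, V₁', a, b)`:
a chain `⊥ = W 0 ⊂ W 1 = V₁ ⊂ ⋯ ⊂ W k` with `dim (W j) = j`, such that
`V₁' ⊓ W (k-1) = ⊥`, `V₁' ≤ W k`, and for `1 ≤ j ≤ k` the image of the subspace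
`W j / V₁` of `V/V₁` under `b` equals `(W (j-1) + V₁')/V₁'`. -/
def IsAdmissibleFlag102 (𝕜 : Type*) [Field 𝕜] (V : Type*) [AddCommGroup V] [Module 𝕜 V]
    (V₁ V₁' : Submodule 𝕜 V) (b : (V ⧸ V₁) ≃ₗ[𝕜] (V ⧸ V₁'))
    (k : ℕ) (W : ℕ → Submodule 𝕜 V) : Prop :=
  W 0 = ⊥ ∧ W 1 = V₁ ∧
  (∀ j ≤ k, Module.finrank 𝕜 (W j) = j) ∧
  (∀ j < k, W j ≤ W (j + 1)) ∧
  V₁' ⊓ W (k - 1) = ⊥ ∧ V₁' ≤ W k ∧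
  (∀ j, 1 ≤ j → j ≤ k →
    ((W j).map V₁.mkQ).map b.toLinearMap = ((W (j - 1)) ⊔ V₁').map V₁'.mkQ)

/-!
Pulling `U ≤ V` back along `V → V ⧸ V₁ → V ⧸ V₁'`, with `b` as the second arrow, replaces `U` by
the unique `F U ⊇ V₁` such that `b` carries `F U / V₁` to `(U + V₁') / V₁'`. An admissible flag
must therefore be `W j = F^[j] ⊥`. As long as `V₁'` meets `U` trivially, `F` raises the dimension of
`U` by `dim V₁ = 1`, so `V₁'` meets some `W k` nontrivially; for the first such `k` the line `V₁'`
lies in `W k`, and `k = dim (W k) ≤ dim V`.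
-/

open Module

theorem finrank_map_add_finrank_inf_ker {K V W : Type*} [DivisionRing K] [AddCommGroup V]
    [Module K V] [AddCommGroup W] [Module K W] (f : V →ₗ[K] W) (U : Submodule K V)
    [FiniteDimensional K U] :
    finrank K (U.map f) + finrank K (U ⊓ LinearMap.ker f : Submodule K V) = finrank K U := by
  rw [← LinearMap.finrank_range_add_finrank_ker (f.domRestrict U), LinearMap.range_domRestrict,
    LinearMap.ker_domRestrict, ← Submodule.map_comap_subtype, Submodule.finrank_map_subtype_eq]

section QuotientPullback

variable {R M N : Type*} [Ring R] [AddCommGroup M] [Module R M] [AddCommGroup N] [Module R N]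
  {P : Submodule R M} {Q : Submodule R N}

/-- The preimage in `M` of the image of `U ≤ N` in `N ⧸ Q`, under `M → M ⧸ P ≃ N ⧸ Q`; the operator
whose iterates form the flag. -/
def quotientPullback (b : (M ⧸ P) ≃ₗ[R] (N ⧸ Q)) (U : Submodule R N) : Submodule R M :=
  ((U.map Q.mkQ).comap b.toLinearMap).comap P.mkQ

theorem quotientPullback_mono (b : (M ⧸ P) ≃ₗ[R] (N ⧸ Q)) : Monotone (quotientPullback b) :=
  fun _ _ h ↦ Submodule.comap_mono (Submodule.comap_mono (Submodule.map_mono h))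

theorem quotientPullback_bot (b : (M ⧸ P) ≃ₗ[R] (N ⧸ Q)) : quotientPullback b ⊥ = P := by
  simp only [quotientPullback, Submodule.map_bot, Submodule.comap_bot, LinearEquiv.ker,
    Submodule.ker_mkQ]

theorem le_quotientPullback (b : (M ⧸ P) ≃ₗ[R] (N ⧸ Q)) (U : Submodule R N) :
    P ≤ quotientPullback b U :=
  (quotientPullback_bot b).ge.trans (quotientPullback_mono b bot_le)

theorem map_map_mkQ_quotientPullback (b : (M ⧸ P) ≃ₗ[R] (N ⧸ Q)) (U : Submodule R N) :
    ((quotientPullback b U).map P.mkQ).map b.toLinearMap = U.map Q.mkQ := by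
  rw [quotientPullback, Submodule.map_comap_eq_of_surjective P.mkQ_surjective,
    Submodule.map_comap_eq_of_surjective b.surjective]

end QuotientPullback

theorem finrank_quotientPullback_add_finrank_inf {K V W : Type*} [DivisionRing K]
    [AddCommGroup V] [Module K V] [FiniteDimensional K V]
    [AddCommGroup W] [Module K W] [FiniteDimensional K W]
    {P : Submodule K V} {Q : Submodule K W} (b : (V ⧸ P) ≃ₗ[K] (W ⧸ Q)) (U : Submodule K W) :
    finrank K (quotientPullback b U) + finrank K (U ⊓ Q : Submodule K W) =
      finrank K U + finrank K P := by
  have rank_pullback := finrank_map_add_finrank_inf_ker P.mkQ (quotientPullback b U)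
  have rank_U := finrank_map_add_finrank_inf_ker Q.mkQ U
  have rank_image : finrank K (U.map Q.mkQ) = finrank K ((quotientPullback b U).map P.mkQ) := by
    rw [← map_map_mkQ_quotientPullback b U]
    exact b.finrank_map_eq _
  rw [Submodule.ker_mkQ, inf_eq_right.mpr (le_quotientPullback b U)] at rank_pullback
  rw [Submodule.ker_mkQ] at rank_U
  omega

section PullbackFlag

variable {R M : Type*} [Ring R] [AddCommGroup M] [Module R M] {P Q : Submodule R M}

/-- The chain `⊥ ≤ P ≤ ⋯` of iterated pullbacks of `⊥` along `b`, the only candidate for an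
admissible flag. It is defined at every level and does not stop at the first term meeting `Q`. -/
def pullbackFlag (b : (M ⧸ P) ≃ₗ[R] (M ⧸ Q)) (n : ℕ) : Submodule R M :=
  (quotientPullback b)^[n] ⊥

theorem pullbackFlag_zero (b : (M ⧸ P) ≃ₗ[R] (M ⧸ Q)) : pullbackFlag b 0 = ⊥ := rfl

theorem pullbackFlag_succ (b : (M ⧸ P) ≃ₗ[R] (M ⧸ Q)) (n : ℕ) :
    pullbackFlag b (n + 1) = quotientPullback b (pullbackFlag b n) :=
  Function.iterate_succ_apply' _ _ _

theorem pullbackFlag_one (b : (M ⧸ P) ≃ₗ[R] (M ⧸ Q)) : pullbackFlag b 1 = P :=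
  quotientPullback_bot b

theorem pullbackFlag_mono (b : (M ⧸ P) ≃ₗ[R] (M ⧸ Q)) : Monotone (pullbackFlag b) :=
  (quotientPullback_mono b).monotone_iterate_of_le_map bot_le

theorem map_map_mkQ_pullbackFlag_succ (b : (M ⧸ P) ≃ₗ[R] (M ⧸ Q)) (n : ℕ) :
    ((pullbackFlag b (n + 1)).map P.mkQ).map b.toLinearMap =
      (pullbackFlag b n ⊔ Q).map Q.mkQ := by
  rw [pullbackFlag_succ, map_map_mkQ_quotientPullback, Submodule.map_sup, Submodule.mkQ_map_self,
    sup_bot_eq]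

end PullbackFlag

section Dimension

variable {K V : Type*} [DivisionRing K] [AddCommGroup V] [Module K V] [FiniteDimensional K V]
  {P Q : Submodule K V}

theorem finrank_pullbackFlag (b : (V ⧸ P) ≃ₗ[K] (V ⧸ Q)) {n : ℕ}
    (h : ∀ j < n, Disjoint Q (pullbackFlag b j)) :
    finrank K (pullbackFlag b n) = n * finrank K P := by
  induction n with
  | zero => rw [pullbackFlag_zero, finrank_bot, zero_mul]
  | succ n ih =>
    have rank_step := finrank_quotientPullback_add_finrank_inf b (pullbackFlag b n)
    rw [(h n n.lt_succ_self).symm.eq_bot, finrank_bot, add_zero,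
      ih fun j hj ↦ h j (hj.trans n.lt_succ_self)] at rank_step
    rw [pullbackFlag_succ, rank_step, Nat.succ_mul]

theorem exists_not_disjoint_pullbackFlag (b : (V ⧸ P) ≃ₗ[K] (V ⧸ Q)) (hP : P ≠ ⊥) :
    ∃ k, ¬ Disjoint Q (pullbackFlag b k) := by
  by_contra! h
  have rank_eq := finrank_pullbackFlag b (n := finrank K V + 1) fun j _ ↦ h j
  have rank_pos : 1 ≤ finrank K P := Submodule.one_le_finrank_iff.mpr hP
  have : finrank K V + 1 ≤ finrank K V := calc
    finrank K V + 1 ≤ (finrank K V + 1) * finrank K P := Nat.le_mul_of_pos_right _ rank_pos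
    _ = finrank K (pullbackFlag b (finrank K V + 1)) := rank_eq.symm
    _ ≤ finrank K V := Submodule.finrank_le _
  exact Nat.not_succ_le_self _ this

end Dimension

theorem isAdmissibleFlag102_pullbackFlag {𝕜 V : Type*} [Field 𝕜] [AddCommGroup V] [Module 𝕜 V]
    [FiniteDimensional 𝕜 V] {V₁ V₁' : Submodule 𝕜 V} (hV₁ : finrank 𝕜 V₁ = 1)
    (b : (V ⧸ V₁) ≃ₗ[𝕜] (V ⧸ V₁')) {k : ℕ} (hk : 1 ≤ k)
    (disjoint_lt : ∀ j < k, Disjoint V₁' (pullbackFlag b j)) (le_k : V₁' ≤ pullbackFlag b k) :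
    IsAdmissibleFlag102 𝕜 V V₁ V₁' b k (pullbackFlag b) := by
  refine ⟨pullbackFlag_zero b, pullbackFlag_one b, fun j hj ↦ ?_,
    fun j _ ↦ pullbackFlag_mono b j.le_succ, (disjoint_lt (k - 1) (by omega)).eq_bot, le_k,
    fun j hj _ ↦ ?_⟩
  · rw [finrank_pullbackFlag b fun i hi ↦ disjoint_lt i (hi.trans_le hj), hV₁, mul_one]
  · obtain ⟨n, rfl⟩ := Nat.exists_eq_add_of_le' hj
    exact map_map_mkQ_pullbackFlag_succ b n

theorem covering_10_2_general {𝕜 V : Type*} [Field 𝕜] [AddCommGroup V] [Module 𝕜 V]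
    [FiniteDimensional 𝕜 V] {V₁ V₁' : Submodule 𝕜 V} (hV₁ : finrank 𝕜 V₁ = 1)
    (hV₁' : finrank 𝕜 V₁' = 1) (b : (V ⧸ V₁) ≃ₗ[𝕜] (V ⧸ V₁')) :
    ∃ k, 1 ≤ k ∧ k ≤ finrank 𝕜 V ∧ ∃ W : ℕ → Submodule 𝕜 V,
      IsAdmissibleFlag102 𝕜 V V₁ V₁' b k W := by
  classical
  have V₁_ne_bot : V₁ ≠ ⊥ := (Submodule.isAtom_iff_finrank_eq_one.mpr hV₁).ne_bot
  have exists_meet := exists_not_disjoint_pullbackFlag b V₁_ne_bot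
  obtain ⟨k, meets_k, disjoint_lt⟩ : ∃ k, ¬ Disjoint V₁' (pullbackFlag b k) ∧
      ∀ j < k, Disjoint V₁' (pullbackFlag b j) :=
    ⟨Nat.find exists_meet, Nat.find_spec exists_meet,
      fun _ hj ↦ not_not.mp (Nat.find_min exists_meet hj)⟩
  have hk : 1 ≤ k := Nat.one_le_iff_ne_zero.mpr fun h ↦ meets_k (h ▸ disjoint_bot_right)
  have le_k : V₁' ≤ pullbackFlag b k :=
    (Submodule.isAtom_iff_finrank_eq_one.mpr hV₁').not_disjoint_iff_le.mp meets_k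
  have k_le : k ≤ finrank 𝕜 V := by
    have rank_k := finrank_pullbackFlag b disjoint_lt
    rw [hV₁, mul_one] at rank_k
    exact rank_k ▸ Submodule.finrank_le (pullbackFlag b k)
  exact ⟨k, hk, k_le, pullbackFlag b, isAdmissibleFlag102_pullbackFlag hV₁ b hk disjoint_lt le_k⟩

/-- Covering: every quadruple `(V₁, V₁', a, b)` in `Σ` admits an admissible flag of
some level `k`, `1 ≤ k ≤ d`; i.e. the images `π_k(Σ̃_k)`, `k = 1, …, d`, cover `Σ`. -/
theorem covering_10_2 (𝕜 : Type*) [Field 𝕜] [IsAlgClosed 𝕜]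
    (V : Type*) [AddCommGroup V] [Module 𝕜 V] [FiniteDimensional 𝕜 V]
    (d : ℕ) (hd : 2 ≤ d) (hdim : Module.finrank 𝕜 V = d)
    (V₁ V₁' : Submodule 𝕜 V)
    (hV₁ : Module.finrank 𝕜 V₁ = 1) (hV₁' : Module.finrank 𝕜 V₁' = 1)
    (a : V₁ ≃ₗ[𝕜] V₁') (b : (V ⧸ V₁) ≃ₗ[𝕜] (V ⧸ V₁')) :
    ∃ k, 1 ≤ k ∧ k ≤ d ∧ ∃ W : ℕ → Submodule 𝕜 V,
      IsAdmissibleFlag102 𝕜 V V₁ V₁' b k W := by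
  subst hdim
  exact covering_10_2_general hV₁ hV₁' b
end

section
/- If a quadruple (V₁, V₁′, a, b) in Σ admits an admissible flag 0 = V₀ ⊂ V₁ ⊂ ⋯ ⊂ V_k of level k and an admissible flag 0 = W₀ ⊂ W₁ ⊂ ⋯ ⊂ W_{k′} of level k′, then k = k′ and V_j = W_j for all j; in other words, each map π_k is injective and the images π_k(Σ̃_k), k = 1, …, d, are pairwise disjoint, so that together with the covering statement they form a partition of Σ into d pieces. -/
/-!
Pulling `(T + V₁') / V₁'` back along `V → V / V₁ → V / V₁'` is a monotone operation on subspaces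
`T` of `V` which depends only on `b`. The members of an admissible flag are the iterates of this
operation starting from `⊥`, and the level is the first index at which the iterate contains `V₁'`.
-/

section FlagStep

variable {R M : Type*} [Ring R] [AddCommGroup M] [Module R M] {P Q : Submodule R M}

/-- The operation sending a submodule `T` of `M` to the preimage of `(T + Q) / Q` under
`M → M / P → M / Q`. It produces each member of an admissible flag from the preceding one. The
summand `Q` is left out because it vanishes in `M / Q`. -/
def flagStep (b : (M ⧸ P) →ₗ[R] (M ⧸ Q)) (T : Submodule R M) : Submodule R M :=
  (T.map Q.mkQ).comap (b ∘ₗ P.mkQ)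

theorem flagStep_mono (b : (M ⧸ P) →ₗ[R] (M ⧸ Q)) : Monotone (flagStep b) :=
  fun _ _ hST => Submodule.comap_mono (Submodule.map_mono hST)

theorem monotone_iterate_flagStep_bot (b : (M ⧸ P) →ₗ[R] (M ⧸ Q)) :
    Monotone fun n => (flagStep b)^[n] ⊥ :=
  (flagStep_mono b).monotone_iterate_of_le_map bot_le

theorem eq_flagStep_of_map_eq {b : (M ⧸ P) →ₗ[R] (M ⧸ Q)} (hb : Function.Injective b)
    {T U : Submodule R M} (hPU : P ≤ U)
    (hU : (U.map P.mkQ).map b = (T ⊔ Q).map Q.mkQ) : U = flagStep b T := by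
  have hTQ : (T ⊔ Q).map Q.mkQ = T.map Q.mkQ := by
    rw [Submodule.map_sup, Submodule.mkQ_map_self, sup_bot_eq]
  calc
    U = (U.map P.mkQ).comap P.mkQ := by rw [Submodule.comap_map_mkQ, sup_eq_right.2 hPU]
    _ = (((U.map P.mkQ).map b).comap b).comap P.mkQ := by
      rw [Submodule.comap_map_eq_of_injective hb]
    _ = flagStep b T := by rw [hU, hTQ, flagStep, Submodule.comap_comp]

end FlagStep

namespace IsAdmissibleFlag102

variable {𝕜 V : Type*} [Field 𝕜] [AddCommGroup V] [Module 𝕜 V] {V₁ V₁' : Submodule 𝕜 V}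
  {b : (V ⧸ V₁) ≃ₗ[𝕜] (V ⧸ V₁')} {k : ℕ} {W : ℕ → Submodule 𝕜 V}

theorem monotoneOn (hW : IsAdmissibleFlag102 𝕜 V V₁ V₁' b k W) : MonotoneOn W (Set.Iic k) := by
  obtain ⟨-, -, -, hchain, -⟩ := hW
  exact monotoneOn_of_le_succ Set.ordConnected_Iic fun j _ _ hj => hchain j hj

theorem succ_eq_flagStep (hW : IsAdmissibleFlag102 𝕜 V V₁ V₁' b k W) {j : ℕ} (hj : j < k) :
    W (j + 1) = flagStep b.toLinearMap (W j) := by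
  have hline : W 1 ≤ W (j + 1) :=
    hW.monotoneOn (Set.mem_Iic.2 (by lia)) (Set.mem_Iic.2 hj) (by lia)
  obtain ⟨-, hW₁, -, -, -, -, hmap⟩ := hW
  exact eq_flagStep_of_map_eq b.injective (hW₁ ▸ hline) (hmap (j + 1) (by lia) hj)

theorem eq_iterate_flagStep (hW : IsAdmissibleFlag102 𝕜 V V₁ V₁' b k W) {j : ℕ} (hj : j ≤ k) :
    W j = (flagStep b.toLinearMap)^[j] ⊥ := by
  induction j with
  | zero => exact hW.1
  | succ j ih => rw [hW.succ_eq_flagStep hj, ih (by lia), Function.iterate_succ_apply']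

theorem isLeast_level (hW : IsAdmissibleFlag102 𝕜 V V₁ V₁' b k W) (hV₁' : V₁' ≠ ⊥) :
    IsLeast {j | V₁' ≤ (flagStep b.toLinearMap)^[j] ⊥} k := by
  have hiter : ∀ j ≤ k, W j = (flagStep b.toLinearMap)^[j] ⊥ := fun _ => hW.eq_iterate_flagStep
  obtain ⟨-, -, -, -, hinf, htop, -⟩ := hW
  refine ⟨htop.trans_eq (hiter k le_rfl), fun j hj => ?_⟩
  by_contra! hjk
  have hpred : V₁' ≤ W (k - 1) := by
    rw [hiter (k - 1) (by lia)]
    exact hj.trans (monotone_iterate_flagStep_bot b.toLinearMap (by lia))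
  exact hV₁' (by rwa [inf_eq_left.2 hpred] at hinf)

end IsAdmissibleFlag102

theorem uniqueness_10_2_general {𝕜 V : Type*} [Field 𝕜] [AddCommGroup V] [Module 𝕜 V]
    {V₁ V₁' : Submodule 𝕜 V} (hV₁' : V₁' ≠ ⊥) {b : (V ⧸ V₁) ≃ₗ[𝕜] (V ⧸ V₁')}
    {k k' : ℕ} {W W' : ℕ → Submodule 𝕜 V}
    (hW : IsAdmissibleFlag102 𝕜 V V₁ V₁' b k W)
    (hW' : IsAdmissibleFlag102 𝕜 V V₁ V₁' b k' W') :
    k = k' ∧ ∀ j ≤ k, W j = W' j := by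
  have hlevel : k = k' := (hW.isLeast_level hV₁').unique (hW'.isLeast_level hV₁')
  refine ⟨hlevel, fun j hj => ?_⟩
  rw [hW.eq_iterate_flagStep hj, hW'.eq_iterate_flagStep (hlevel ▸ hj)]

/-- Uniqueness: if `(V₁, V₁', a, b)` admits an admissible flag of level `k` and one of
level `k'`, then `k = k'` and the two flags agree; i.e. each `π_k` is injective and the
images `π_k(Σ̃_k)` are pairwise disjoint. -/
theorem uniqueness_10_2 (𝕜 : Type*) [Field 𝕜] [IsAlgClosed 𝕜]
    (V : Type*) [AddCommGroup V] [Module 𝕜 V] [FiniteDimensional 𝕜 V]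
    (d : ℕ) (hd : 2 ≤ d) (hdim : Module.finrank 𝕜 V = d)
    (V₁ V₁' : Submodule 𝕜 V)
    (hV₁ : Module.finrank 𝕜 V₁ = 1) (hV₁' : Module.finrank 𝕜 V₁' = 1)
    (a : V₁ ≃ₗ[𝕜] V₁') (b : (V ⧸ V₁) ≃ₗ[𝕜] (V ⧸ V₁'))
    (k k' : ℕ) (hk : 1 ≤ k) (hkd : k ≤ d) (hk' : 1 ≤ k') (hk'd : k' ≤ d)
    (W W' : ℕ → Submodule 𝕜 V)
    (hW : IsAdmissibleFlag102 𝕜 V V₁ V₁' b k W)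
    (hW' : IsAdmissibleFlag102 𝕜 V V₁ V₁' b k' W') :
    k = k' ∧ ∀ j ≤ k, W j = W' j := by
  exact uniqueness_10_2_general (Submodule.one_le_finrank_iff.1 hV₁'.ge) hW hW'
end

section
/- For every quadruple (V₁, H, a, b) in Σ there exist an integer k with 1 ≤ k ≤ d and an admissible flag of level k for (V₁, H, a, b); in other words, the images π_k(Σ̃_k) for k = 1, …, d cover all of Σ. -/
/-- §10.3: an admissible flag of level `k` for a quadruple `(V₁, H, a, b)`:
a chain `⊥ = W 0 ⊂ W 1 = V₁ ⊂ ⋯ ⊂ W k` with `dim (W j) = j`, such that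
`W (k-1) = W k ⊓ H` and for `1 ≤ j ≤ k` the image of the subspace `W j / V₁` of
`V/V₁` under `b` equals `W (j-1)`, regarded as a subspace of `H`. -/
def IsAdmissibleFlag103 (𝕜 : Type*) [Field 𝕜] (V : Type*) [AddCommGroup V] [Module 𝕜 V]
    (V₁ H : Submodule 𝕜 V) (b : (V ⧸ V₁) ≃ₗ[𝕜] H)
    (k : ℕ) (W : ℕ → Submodule 𝕜 V) : Prop :=
  W 0 = ⊥ ∧ W 1 = V₁ ∧
  (∀ j ≤ k, Module.finrank 𝕜 (W j) = j) ∧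
  (∀ j < k, W j ≤ W (j + 1)) ∧
  W (k - 1) = W k ⊓ H ∧
  (∀ j, 1 ≤ j → j ≤ k →
    (((W j).map V₁.mkQ).map b.toLinearMap).map H.subtype = W (j - 1))

/-!
Let `f` be the composite `V → V/V₁ ≃ H → V`, so that `ker f = V₁` and `range f = H`. The condition
`b (W j / V₁) = W (j - 1)` says `f (W j) = W (j - 1)`, which forces `W j = ker (f ^ j)`. As long as
`ker (f ^ j) ≤ H`, every vector of `ker (f ^ j)` lifts along `f`, so the next kernel is bigger by
exactly `dim V₁ = 1`. In finite dimension this must stop, and the first `k` with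
`¬ ker (f ^ k) ≤ H` is the level: then `ker (f ^ k) ⊓ H` lies strictly below `ker (f ^ k)` and
contains its hyperplane `ker (f ^ (k - 1))`, so the two are equal.
-/

section KernelsOfPowers

open LinearMap (ker range)
open Module (finrank)

section Semiring

variable {R M : Type*} [Semiring R] [AddCommMonoid M] [Module R M] {f : Module.End R M}

theorem ker_pow_succ_eq_comap (f : Module.End R M) (n : ℕ) :
    ker (f ^ (n + 1)) = (ker (f ^ n)).comap f := by
  rw [pow_succ, Module.End.mul_eq_comp, LinearMap.ker_comp]

theorem map_ker_pow_succ_of_le_range {n : ℕ} (hn : ker (f ^ n) ≤ range f) :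
    (ker (f ^ (n + 1))).map f = ker (f ^ n) := by
  rw [ker_pow_succ_eq_comap, Submodule.map_comap_eq_of_le hn]

theorem map_pow_eq_self_of_map_eq_self {p : Submodule R M} (hp : p.map f = p) (n : ℕ) :
    p.map (f ^ n) = p := by
  induction n with
  | zero => exact Submodule.map_id p
  | succ n ih => rw [pow_succ, Module.End.mul_eq_comp, Submodule.map_comp, hp, ih]

theorem ker_eq_bot_of_forall_ker_pow_le_range [IsNoetherian R M]
    (h : ∀ n, ker (f ^ n) ≤ range f) : ker f = ⊥ := by
  obtain ⟨n, hn⟩ := monotone_stabilizes_iff_noetherian.mpr inferInstance f.iterateKer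
  have stable : ker (f ^ (n + 1)) = ker (f ^ n) := (hn (n + 1) n.le_succ).symm
  -- On the stable kernel `f` is both surjective and nilpotent, so this kernel is zero.
  have map_ker : (ker (f ^ n)).map f = ker (f ^ n) := by
    rw [← stable, map_ker_pow_succ_of_le_range (h n), stable]
  have ker_pow_eq_bot : ker (f ^ n) = ⊥ := by
    rw [← map_pow_eq_self_of_map_eq_self map_ker n]
    exact LinearMap.le_ker_iff_map.mp le_rfl
  rw [eq_bot_iff, ← ker_pow_eq_bot, ← stable]
  exact LinearMap.ker_le_ker_comp f (f ^ n)

theorem exists_ker_pow_le_range_and_not_ker_pow_succ_le_range [IsNoetherian R M]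
    (hf : ker f ≠ ⊥) : ∃ n, ker (f ^ n) ≤ range f ∧ ¬ ker (f ^ (n + 1)) ≤ range f := by
  have start : ker (f ^ 0) ≤ range f := (LinearMap.ker_id (R := R) (M := M)).trans_le bot_le
  by_contra! step
  exact hf (ker_eq_bot_of_forall_ker_pow_le_range fun n => Nat.rec start step n)

end Semiring

section DivisionRing

variable {K V V' : Type*} [DivisionRing K] [AddCommGroup V] [Module K V]
  [AddCommGroup V'] [Module K V']

theorem finrank_comap_of_le_range [FiniteDimensional K V] {g : V →ₗ[K] V'} {p : Submodule K V'}
    (hp : p ≤ range g) : finrank K (p.comap g) = finrank K p + finrank K (ker g) := by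
  have ker_le : ker g ≤ p.comap g := Submodule.comap_mono bot_le
  have rank_nullity := (g.domRestrict (p.comap g)).finrank_range_add_finrank_ker
  rw [LinearMap.range_domRestrict, Submodule.map_comap_eq_of_le hp, LinearMap.ker_domRestrict,
    (Submodule.comapSubtypeEquivOfLe ker_le).finrank_eq] at rank_nullity
  exact rank_nullity.symm

theorem finrank_ker_pow_of_le_range [FiniteDimensional K V] {f : Module.End K V} {n : ℕ}
    (hn : ker (f ^ n) ≤ range f) :
    ∀ j ≤ n + 1, finrank K (ker (f ^ j)) = j * finrank K (ker f)
  | 0, _ => by rw [pow_zero, Module.End.one_eq_id, LinearMap.ker_id, finrank_bot, zero_mul]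
  | j + 1, hj => by
    have ker_pow_le : ker (f ^ j) ≤ range f :=
      (f.iterateKer.monotone (Nat.le_of_succ_le_succ hj)).trans hn
    rw [ker_pow_succ_eq_comap, finrank_comap_of_le_range ker_pow_le,
      finrank_ker_pow_of_le_range hn j (Nat.le_of_succ_le hj), Nat.succ_mul]

theorem inf_eq_of_finrank_eq_succ {p q r : Submodule K V} [FiniteDimensional K q]
    (hpq : p ≤ q) (hpr : p ≤ r) (hqr : ¬ q ≤ r) (hfinrank : finrank K q = finrank K p + 1) :
    q ⊓ r = p := by
  have : FiniteDimensional K ↥(q ⊓ r) := Submodule.finiteDimensional_of_le inf_le_left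
  have finrank_lt : finrank K ↥(q ⊓ r) < finrank K q :=
    Submodule.finrank_lt_finrank_of_lt (inf_lt_left.mpr hqr)
  exact (Submodule.eq_of_le_of_finrank_le (le_inf hpq hpr) (by omega)).symm

end DivisionRing

end KernelsOfPowers

section QuotientEquiv

variable {R M : Type*} [Ring R] [AddCommGroup M] [Module R M] {N P : Submodule R M}

/-- The endomorphism `M → M ⧸ N ≃ P → M` attached to an isomorphism `b : M ⧸ N ≃ P`; it turns
the condition on `b` in the definition of an admissible flag into one on a single endomorphism. -/
def endOfQuotientEquiv (b : (M ⧸ N) ≃ₗ[R] P) : Module.End R M :=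
  P.subtype ∘ₗ b.toLinearMap ∘ₗ N.mkQ

theorem ker_endOfQuotientEquiv (b : (M ⧸ N) ≃ₗ[R] P) :
    LinearMap.ker (endOfQuotientEquiv b) = N := by
  rw [endOfQuotientEquiv, LinearMap.ker_comp_of_ker_eq_bot _ P.ker_subtype,
    LinearMap.ker_comp_of_ker_eq_bot _ b.ker, N.ker_mkQ]

theorem range_endOfQuotientEquiv (b : (M ⧸ N) ≃ₗ[R] P) :
    LinearMap.range (endOfQuotientEquiv b) = P := by
  rw [endOfQuotientEquiv, LinearMap.range_comp, LinearMap.range_comp, N.range_mkQ,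
    Submodule.map_top, b.range, Submodule.map_top, P.range_subtype]

theorem map_endOfQuotientEquiv (b : (M ⧸ N) ≃ₗ[R] P) (W : Submodule R M) :
    W.map (endOfQuotientEquiv b) =
      ((W.map N.mkQ).map b.toLinearMap).map P.subtype := by
  rw [endOfQuotientEquiv, Submodule.map_comp, Submodule.map_comp]

end QuotientEquiv

theorem isAdmissibleFlag103_ker_pow {𝕜 V : Type*} [Field 𝕜] [AddCommGroup V] [Module 𝕜 V]
    [FiniteDimensional 𝕜 V] {V₁ H : Submodule 𝕜 V} (hV₁ : Module.finrank 𝕜 V₁ = 1)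
    (b : (V ⧸ V₁) ≃ₗ[𝕜] H) {n : ℕ}
    (hn : LinearMap.ker (endOfQuotientEquiv b ^ n) ≤ H)
    (hn_succ : ¬ LinearMap.ker (endOfQuotientEquiv b ^ (n + 1)) ≤ H) :
    IsAdmissibleFlag103 𝕜 V V₁ H b (n + 1)
      fun j => LinearMap.ker (endOfQuotientEquiv b ^ j) := by
  set f := endOfQuotientEquiv b with hf
  have ker_f : LinearMap.ker f = V₁ := ker_endOfQuotientEquiv b
  have finrank_ker_f : Module.finrank 𝕜 (LinearMap.ker f) = 1 := by rw [ker_f, hV₁]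
  have range_f : LinearMap.range f = H := range_endOfQuotientEquiv b
  have ker_mono : Monotone fun j => LinearMap.ker (f ^ j) := f.iterateKer.monotone
  have finrank_ker : ∀ j ≤ n + 1, Module.finrank 𝕜 (LinearMap.ker (f ^ j)) = j := by
    simpa only [finrank_ker_f, mul_one] using
      finrank_ker_pow_of_le_range (hn.trans_eq range_f.symm)
  refine ⟨LinearMap.ker_id, by simpa only [pow_one] using ker_f, finrank_ker,
    fun j _ => ker_mono j.le_succ, ?_, ?_⟩
  · refine (inf_eq_of_finrank_eq_succ (ker_mono n.le_succ) hn hn_succ ?_).symm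
    rw [finrank_ker (n + 1) le_rfl, finrank_ker n n.le_succ]
  · rintro (_ | j) one_le_j j_le
    · contradiction
    · rw [← map_endOfQuotientEquiv, ← hf]
      refine map_ker_pow_succ_of_le_range ?_
      exact (ker_mono (Nat.le_of_succ_le_succ j_le)).trans (hn.trans_eq range_f.symm)

theorem covering_10_3_general (𝕜 : Type*) [Field 𝕜]
    (V : Type*) [AddCommGroup V] [Module 𝕜 V] [FiniteDimensional 𝕜 V]
    (V₁ H : Submodule 𝕜 V) (hV₁ : Module.finrank 𝕜 V₁ = 1) (b : (V ⧸ V₁) ≃ₗ[𝕜] H) :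
    ∃ k, 1 ≤ k ∧ k ≤ Module.finrank 𝕜 V ∧ ∃ W : ℕ → Submodule 𝕜 V,
      IsAdmissibleFlag103 𝕜 V V₁ H b k W := by
  have ker_ne_bot : LinearMap.ker (endOfQuotientEquiv b) ≠ ⊥ := by
    rw [ker_endOfQuotientEquiv]
    exact Submodule.one_le_finrank_iff.mp hV₁.ge
  obtain ⟨n, hn, hn_succ⟩ := exists_ker_pow_le_range_and_not_ker_pow_succ_le_range ker_ne_bot
  rw [range_endOfQuotientEquiv] at hn hn_succ
  have flag := isAdmissibleFlag103_ker_pow hV₁ b hn hn_succ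
  have finrank_top_step := flag.2.2.1 (n + 1) le_rfl
  exact ⟨n + 1, n.succ_pos, finrank_top_step.ge.trans (Submodule.finrank_le _), _, flag⟩

/-- Covering: every quadruple `(V₁, H, a, b)` in `Σ` admits an admissible flag of
some level `k`, `1 ≤ k ≤ d`; i.e. the images `π_k(Σ̃_k)`, `k = 1, …, d`, cover `Σ`. -/
theorem covering_10_3 (𝕜 : Type*) [Field 𝕜] [IsAlgClosed 𝕜]
    (V : Type*) [AddCommGroup V] [Module 𝕜 V] [FiniteDimensional 𝕜 V]
    (d : ℕ) (hd : 2 ≤ d) (hdim : Module.finrank 𝕜 V = d)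
    (V₁ H : Submodule 𝕜 V)
    (hV₁ : Module.finrank 𝕜 V₁ = 1) (hH : Module.finrank 𝕜 H = d - 1)
    (a : V₁ ≃ₗ[𝕜] (V ⧸ H)) (b : (V ⧸ V₁) ≃ₗ[𝕜] H) :
    ∃ k, 1 ≤ k ∧ k ≤ d ∧ ∃ W : ℕ → Submodule 𝕜 V,
      IsAdmissibleFlag103 𝕜 V V₁ H b k W :=
  hdim ▸ covering_10_3_general 𝕜 V V₁ H hV₁ b
end
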